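/- For every integer a ≥ 2, R⁺(a,a) = ((2a−1)/(2a)) · R⁺(a−1, a−1), and the sequence a ↦ R⁺(a,a) = (1/2)^{2a} / (a · B(a,a)) tends to 0 as the positive integer a tends to infinity. -/

import Mathlib

/-- The Beta function `B(a,b) = ∫₀¹ t^(a-1) (1-t)^(b-1) dt`. -/
noncomputable def betaFn (a b : ℝ) : ℝ := ∫ t in (0:ℝ)..1, t ^ (a - 1) * (1 - t) ^ (b - 1)

/-- `I(a,b)`: the probability that a `Beta(a,b)` random variable is `≥ 1/2`. -/
noncomputable def I (a b : ℝ) : ℝ :=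
  (1 / betaFn a b) * ∫ t in (1/2 : ℝ)..1, t ^ (a - 1) * (1 - t) ^ (b - 1)

/-- `h(x) = max (x, 1-x)`. -/
noncomputable def hFn (x : ℝ) : ℝ := max x (1 - x)

/-- Expected stage-wise reward. -/
noncomputable def R (a b : ℝ) : ℝ :=
  a / (a + b) * (hFn (I (a + 1) b) - hFn (I a b)) +
    b / (a + b) * (hFn (I a (b + 1)) - hFn (I a b))

/-- Optimistic knowledge-gradient reward. -/
noncomputable def Rplus (a b : ℝ) : ℝ :=
  max (hFn (I (a + 1) b) - hFn (I a b)) (hFn (I a (b + 1)) - hFn (I a b))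

/-- Pessimistic knowledge-gradient reward. -/
noncomputable def Rminus (a b : ℝ) : ℝ :=
  min (hFn (I (a + 1) b) - hFn (I a b)) (hFn (I a (b + 1)) - hFn (I a b))

/-!
Integrating the derivative of `t ^ a * (1 - t) ^ b` over `[1/2, 1]` and over `[0, 1]` shows that one
more success raises `I a b` by `(1/2) ^ (a + b) / (a * B(a, b))`; by the reflection `t ↦ 1 - t`, one
more failure lowers it by `(1/2) ^ (a + b) / (b * B(a, b))`. On the diagonal `I a a = 1/2`, so both
moves increase `h` by the same amount `(1/2) ^ (2 * a) / (a * B(a, a))`. Legendre's duplication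
formula turns this into `Γ(a + 1/2) / (2 * √π * Γ(a + 1))`: the functional equation of `Γ` gives the
ratio, and the log-convexity of `Γ` bounds the reward by `1 / (2 * √π * √a)`.
-/

open Real Set Filter MeasureTheory

/-- The upper incomplete Beta function `∫ₓ¹ t^(a-1) (1-t)^(b-1) dt`: it is the Beta function at
`x = 0` and the numerator of `I` at `x = 1/2`, so that both satisfy the same recurrence. -/
noncomputable def upperBeta (x a b : ℝ) : ℝ := ∫ t in x..1, t ^ (a - 1) * (1 - t) ^ (b - 1)

theorem betaFn_eq_upperBeta (a b : ℝ) : betaFn a b = upperBeta 0 a b := rfl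

theorem I_eq_upperBeta_div (a b : ℝ) : I a b = upperBeta (1 / 2) a b / betaFn a b :=
  one_div_mul_eq_div _ _

theorem ofReal_rpow_mul_one_sub_rpow {t : ℝ} (ht : t ∈ Icc (0 : ℝ) 1) (a b : ℝ) :
    ((t ^ (a - 1) * (1 - t) ^ (b - 1) : ℝ) : ℂ) =
      (t : ℂ) ^ ((a : ℂ) - 1) * (1 - (t : ℂ)) ^ ((b : ℂ) - 1) := by
  push_cast [Complex.ofReal_cpow ht.1, Complex.ofReal_cpow (sub_nonneg.2 ht.2)]
  rfl

theorem ofReal_betaFn (a b : ℝ) : (betaFn a b : ℂ) = Complex.betaIntegral a b := by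
  rw [betaFn, Complex.betaIntegral, ← intervalIntegral.integral_ofReal]
  refine intervalIntegral.integral_congr fun t ht ↦ ofReal_rpow_mul_one_sub_rpow ?_ a b
  rwa [uIcc_of_le zero_le_one] at ht

theorem integral_zero_one_sub_eq_upperBeta (x a b : ℝ) :
    ∫ t in 0..1 - x, t ^ (a - 1) * (1 - t) ^ (b - 1) = upperBeta x b a := by
  rw [upperBeta, ← sub_self (1 : ℝ), ← intervalIntegral.integral_comp_sub_left]
  simp only [sub_sub_cancel, mul_comm]

theorem betaFn_comm (a b : ℝ) : betaFn a b = betaFn b a := by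
  simpa only [sub_zero, betaFn, upperBeta] using integral_zero_one_sub_eq_upperBeta 0 a b

theorem hasDerivAt_rpow_mul_one_sub_rpow (a b : ℝ) {t : ℝ} (ht : t ∈ Ioo (0 : ℝ) 1) :
    HasDerivAt (fun t : ℝ ↦ t ^ a * (1 - t) ^ b)
      (a * (t ^ (a - 1) * (1 - t) ^ (b - 1)) - (a + b) * (t ^ (a + 1 - 1) * (1 - t) ^ (b - 1)))
      t := by
  have ht₀ : 0 < t := ht.1
  have ht₁ : 0 < 1 - t := sub_pos.2 ht.2
  have hleft : HasDerivAt (fun t : ℝ ↦ t ^ a) (a * t ^ (a - 1)) t :=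
    hasDerivAt_rpow_const (.inl ht₀.ne')
  have hright : HasDerivAt (fun t : ℝ ↦ (1 - t) ^ b) (-1 * b * (1 - t) ^ (b - 1)) t :=
    ((hasDerivAt_id' t).const_sub 1).rpow_const (.inl ht₁.ne')
  refine (hleft.mul hright).congr_deriv ?_
  rw [add_sub_cancel_right, rpow_sub_one ht₀.ne', rpow_sub_one ht₁.ne']
  field_simp
  ring

theorem hFn_half_add (x : ℝ) : hFn (1 / 2 + x) = 1 / 2 + |x| := by
  rw [hFn, abs, max_def, max_def]
  split_ifs <;> linarith

section PositiveParameters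

variable {a b x : ℝ}

theorem betaFn_eq_beta (ha : 0 < a) (hb : 0 < b) : betaFn a b = ProbabilityTheory.beta a b := by
  rw [ProbabilityTheory.beta_eq_betaIntegralReal a b ha hb, ← ofReal_betaFn, Complex.ofReal_re]

theorem betaFn_pos (ha : 0 < a) (hb : 0 < b) : 0 < betaFn a b :=
  betaFn_eq_beta ha hb ▸ ProbabilityTheory.beta_pos ha hb

theorem intervalIntegrable_rpow_mul_one_sub_rpow (ha : 0 < a) (hb : 0 < b)
    {c d : ℝ} (hc : c ∈ Icc (0 : ℝ) 1) (hd : d ∈ Icc (0 : ℝ) 1) :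
    IntervalIntegrable (fun t : ℝ ↦ t ^ (a - 1) * (1 - t) ^ (b - 1)) volume c d := by
  have hcomplex := Complex.betaIntegral_convergent (u := a) (v := b) (by simpa) (by simpa)
  have hreal : IntervalIntegrable (fun t : ℝ ↦ t ^ (a - 1) * (1 - t) ^ (b - 1)) volume 0 1 := by
    rw [intervalIntegrable_iff_integrableOn_Icc_of_le zero_le_one] at hcomplex ⊢
    refine IntegrableOn.congr_fun hcomplex.re (fun t ht ↦ ?_) measurableSet_Icc
    rw [← ofReal_rpow_mul_one_sub_rpow ht, RCLike.re_to_complex, Complex.ofReal_re]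
  exact hreal.mono_set (uIcc_of_le (zero_le_one' ℝ) ▸ uIcc_subset_Icc hc hd)

theorem add_mul_upperBeta_add_one_left (ha : 0 < a) (hb : 0 < b) (hx : x ∈ Icc (0 : ℝ) 1) :
    (a + b) * upperBeta x (a + 1) b = a * upperBeta x a b + x ^ a * (1 - x) ^ b := by
  have hcont : ContinuousOn (fun t : ℝ ↦ t ^ a * (1 - t) ^ b) (Icc x 1) :=
    ((continuous_rpow_const ha.le).mul
      ((continuous_rpow_const hb.le).comp (continuous_const.sub continuous_id))).continuousOn
  have hint (c : ℝ) (hc : 0 < c) :=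
    intervalIntegrable_rpow_mul_one_sub_rpow hc hb hx (right_mem_Icc.2 zero_le_one)
  have hint₀ := (hint a ha).const_mul a
  have hint₁ := (hint (a + 1) (by positivity)).const_mul (a + b)
  have hftc := intervalIntegral.integral_eq_sub_of_hasDerivAt_of_le hx.2 hcont
    (fun t ht ↦ hasDerivAt_rpow_mul_one_sub_rpow a b ⟨hx.1.trans_lt ht.1, ht.2⟩) (hint₀.sub hint₁)
  rw [intervalIntegral.integral_sub hint₀ hint₁, intervalIntegral.integral_const_mul,
    intervalIntegral.integral_const_mul, sub_self, zero_rpow hb.ne', mul_zero] at hftc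
  unfold upperBeta
  linarith

theorem betaFn_add_one_left (ha : 0 < a) (hb : 0 < b) :
    betaFn (a + 1) b = a / (a + b) * betaFn a b := by
  have hrec := add_mul_upperBeta_add_one_left ha hb (left_mem_Icc.2 zero_le_one)
  rw [zero_rpow ha.ne', zero_mul, add_zero] at hrec
  rw [betaFn_eq_upperBeta, betaFn_eq_upperBeta, div_mul_eq_mul_div, eq_div_iff (by positivity),
    mul_comm, hrec]

theorem I_add_I_swap (ha : 0 < a) (hb : 0 < b) : I a b + I b a = 1 := by
  have hhalf : (1 / 2 : ℝ) ∈ Icc (0 : ℝ) 1 := by norm_num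
  have hsplit : upperBeta (1 / 2) b a + upperBeta (1 / 2) a b = betaFn a b := by
    rw [← integral_zero_one_sub_eq_upperBeta, sub_half]
    exact intervalIntegral.integral_add_adjacent_intervals
      (intervalIntegrable_rpow_mul_one_sub_rpow ha hb (left_mem_Icc.2 zero_le_one) hhalf)
      (intervalIntegrable_rpow_mul_one_sub_rpow ha hb hhalf (right_mem_Icc.2 zero_le_one))
  rw [I_eq_upperBeta_div, I_eq_upperBeta_div, betaFn_comm b a, ← add_div, add_comm, hsplit,
    div_self (betaFn_pos ha hb).ne']

theorem I_self (ha : 0 < a) : I a a = 1 / 2 := by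
  linarith [I_add_I_swap ha ha]

theorem I_add_one_left (ha : 0 < a) (hb : 0 < b) :
    I (a + 1) b = I a b + (1 / 2) ^ (a + b) / (a * betaFn a b) := by
  have hbeta := betaFn_pos ha hb
  have hrec := add_mul_upperBeta_add_one_left (x := 1 / 2) ha hb (by norm_num)
  rw [sub_half, ← rpow_add one_half_pos] at hrec
  rw [I_eq_upperBeta_div, I_eq_upperBeta_div, betaFn_add_one_left ha hb]
  field_simp
  linarith

theorem I_add_one_right (ha : 0 < a) (hb : 0 < b) :
    I a (b + 1) = I a b - (1 / 2) ^ (a + b) / (b * betaFn a b) := by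
  have hsucc := I_add_I_swap ha (add_pos hb one_pos)
  rw [I_add_one_left hb ha, betaFn_comm b a, add_comm b a] at hsucc
  linarith [I_add_I_swap ha hb]

theorem Rplus_self (ha : 0 < a) : Rplus a a = (1 / 2) ^ (2 * a) / (a * betaFn a a) := by
  have hbeta := betaFn_pos ha ha
  have hgain : 0 ≤ (1 / 2) ^ (2 * a) / (a * betaFn a a) := by positivity
  have hmid : hFn (I a a) = 1 / 2 := by norm_num [I_self ha, hFn]
  have hsuccess : hFn (I (a + 1) a) = 1 / 2 + (1 / 2) ^ (2 * a) / (a * betaFn a a) := by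
    rw [I_add_one_left ha ha, I_self ha, ← two_mul, hFn_half_add, abs_of_nonneg hgain]
  have hfailure : hFn (I a (a + 1)) = 1 / 2 + (1 / 2) ^ (2 * a) / (a * betaFn a a) := by
    rw [I_add_one_right ha ha, I_self ha, ← two_mul, sub_eq_add_neg, hFn_half_add, abs_neg,
      abs_of_nonneg hgain]
  rw [Rplus, hmid, hsuccess, hfailure, max_self, add_sub_cancel_left]

theorem Rplus_self_eq_Gamma (ha : 0 < a) :
    Rplus a a = Gamma (a + 1 / 2) / (2 * √π * Gamma (a + 1)) := by
  have hΓ := Gamma_pos_of_pos ha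
  have hduplication : Gamma (a + 1 / 2) =
      Gamma (2 * a) * (2 * (1 / 2) ^ (2 * a)) * √π / Gamma a := by
    rw [eq_div_iff hΓ.ne', mul_comm, Gamma_mul_Gamma_add_half, rpow_sub two_pos, rpow_one,
      one_div, inv_rpow two_pos.le, div_eq_mul_inv]
  rw [Rplus_self ha, betaFn_eq_beta ha ha, ProbabilityTheory.beta, ← two_mul, hduplication,
    Gamma_add_one ha.ne']
  field_simp

theorem Gamma_add_half_le (ha : 0 < a) : Gamma (a + 1 / 2) ≤ Gamma (a + 1) / √a := by
  have hΓ := Gamma_pos_of_pos ha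
  calc Gamma (a + 1 / 2)
      = Gamma (1 / 2 * a + 1 / 2 * (a + 1)) := by ring_nf
    _ ≤ Gamma a ^ (1 / 2 : ℝ) * Gamma (a + 1) ^ (1 / 2 : ℝ) :=
        Gamma_mul_add_mul_le_rpow_Gamma_mul_rpow_Gamma ha (by positivity) one_half_pos
          one_half_pos (add_halves 1)
    _ = √(Gamma a ^ 2 * a) := by
        rw [← sqrt_eq_rpow, ← sqrt_eq_rpow, ← sqrt_mul hΓ.le, Gamma_add_one ha.ne']
        ring_nf
    _ = Gamma (a + 1) / √a := by
        rw [sqrt_mul (sq_nonneg _), sqrt_sq hΓ.le, Gamma_add_one ha.ne', eq_div_iff (by positivity),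
          mul_assoc, mul_self_sqrt ha.le, mul_comm]

theorem Rplus_self_nonneg (ha : 0 < a) : 0 ≤ Rplus a a := by
  have hbeta := betaFn_pos ha ha
  rw [Rplus_self ha]
  positivity

theorem Rplus_self_le (ha : 0 < a) : Rplus a a ≤ 1 / (2 * √π) / √a := by
  rw [Rplus_self_eq_Gamma ha]
  calc Gamma (a + 1 / 2) / (2 * √π * Gamma (a + 1))
      ≤ Gamma (a + 1) / √a / (2 * √π * Gamma (a + 1)) := by gcongr; exact Gamma_add_half_le ha
    _ = 1 / (2 * √π) / √a := by field_simp

theorem Rplus_self_eq_mul_Rplus_sub_one (ha : 1 < a) :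
    Rplus a a = (2 * a - 1) / (2 * a) * Rplus (a - 1) (a - 1) := by
  have hpred : 0 < a - 1 := sub_pos.2 ha
  have hpos : 0 < a := one_pos.trans ha
  have hnum : Gamma (a + 1 / 2) = (a - 1 / 2) * Gamma (a - 1 / 2) := by
    rw [← Gamma_add_one (by linarith)]
    ring_nf
  rw [Rplus_self_eq_Gamma hpos, Rplus_self_eq_Gamma hpred, hnum, Gamma_add_one hpos.ne',
    sub_add_cancel, show a - 1 + 1 / 2 = a - 1 / 2 by ring]
  field_simp

end PositiveParameters

theorem tendsto_Rplus_self_atTop : Tendsto (fun a : ℝ ↦ Rplus a a) atTop (nhds 0) := by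
  have hbound : Tendsto (fun a : ℝ ↦ 1 / (2 * √π) / √a) atTop (nhds 0) :=
    tendsto_sqrt_atTop.const_div_atTop _
  refine tendsto_of_tendsto_of_tendsto_of_le_of_le' tendsto_const_nhds hbound ?_ ?_
  · filter_upwards [eventually_gt_atTop 0] with a ha using Rplus_self_nonneg ha
  · filter_upwards [eventually_gt_atTop 0] with a ha using Rplus_self_le ha

theorem Rplus_diag_ratio_and_tendsto_zero_general :
    (∀ a : ℝ, 1 < a → Rplus a a = (2 * a - 1) / (2 * a) * Rplus (a - 1) (a - 1)) ∧
    Tendsto (fun a : ℝ ↦ Rplus a a) atTop (nhds 0) :=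
  ⟨fun _ ↦ Rplus_self_eq_mul_Rplus_sub_one, tendsto_Rplus_self_atTop⟩

theorem Rplus_diag_ratio_and_tendsto_zero :
    (∀ a : ℕ, 2 ≤ a →
      Rplus a a = ((2 * (a : ℝ) - 1) / (2 * (a : ℝ))) * Rplus ((a : ℝ) - 1) ((a : ℝ) - 1)) ∧
    Filter.Tendsto (fun a : ℕ => Rplus a a) Filter.atTop (nhds 0) :=
  ⟨fun a ha ↦ Rplus_diag_ratio_and_tendsto_zero_general.1 a (Nat.one_lt_cast.2 ha),
    Rplus_diag_ratio_and_tendsto_zero_general.2.comp tendsto_natCast_atTop_atTop⟩
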